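/- arXiv:2405.07080 — 2 statements merged into one kernel-verified Lean document; each statement's English description precedes it below -/
import Mathlib

section
/- Let p be a prime, n ≥ 2, and let q : 𝓗(pⁿ) → 𝓗(pⁿ⁻¹) be componentwise reduction modulo pⁿ⁻¹. For every subgroup H of 𝓗(pⁿ⁻¹), the Chermak-Delgado measures satisfy m(q⁻¹(H)) = p⁴ · m(H), i.e. |q⁻¹(H)| · |C(q⁻¹(H))| = p⁴ · |H| · |C(H)|. -/
theorem pc_mem_ker_iff {G K : Type*} [Group G] [Group K] (q : G →* K) (s g : G) :
    s⁻¹ * g⁻¹ * s * g ∈ q.ker ↔ Commute (q s) (q g) := by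
  rw [MonoidHom.mem_ker]
  simp only [map_mul, map_inv]
  rw [mul_assoc, ← mul_inv_rev, inv_mul_eq_one, commute_iff_eq]
  exact eq_comm

/-- The `q`-pseudocentralizer of a subset `S` of `G`:
all `g` such that `[s, g] = s⁻¹ * g⁻¹ * s * g ∈ ker q` for all `s ∈ S`. -/
def pseudocentralizer {G K : Type*} [Group G] [Group K] (q : G →* K) (S : Set G) :
    Subgroup G where
  carrier := {g : G | ∀ s ∈ S, s⁻¹ * g⁻¹ * s * g ∈ q.ker}
  one_mem' := fun s _ => by
    rw [pc_mem_ker_iff, map_one]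
    exact Commute.one_right _
  mul_mem' := fun {a b} ha hb s hs => by
    rw [pc_mem_ker_iff, map_mul]
    exact ((pc_mem_ker_iff q s a).mp (ha s hs)).mul_right ((pc_mem_ker_iff q s b).mp (hb s hs))
  inv_mem' := fun {a} ha s hs => by
    rw [pc_mem_ker_iff, map_inv]
    exact ((pc_mem_ker_iff q s a).mp (ha s hs)).inv_right

theorem mem_pseudocentralizer_iff {G K : Type*} [Group G] [Group K] {q : G →* K} {S : Set G}
    {g : G} : g ∈ pseudocentralizer q S ↔ ∀ s ∈ S, s⁻¹ * g⁻¹ * s * g ∈ q.ker := Iff.rfl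

/-- The mod `r` Heisenberg group, as triples `(x, y, z)` over `ZMod r`. -/
@[ext]
structure Heis (r : ℕ) where
  x : ZMod r
  y : ZMod r
  z : ZMod r

namespace Heis

variable {r : ℕ}

private def hmul (a b : Heis r) : Heis r := ⟨a.x + b.x, a.y + b.y + a.x * b.z, a.z + b.z⟩
private def hone : Heis r := ⟨0, 0, 0⟩
private def hinv (a : Heis r) : Heis r := ⟨-a.x, a.x * a.z - a.y, -a.z⟩

instance : Group (Heis r) where
  mul := hmul
  one := hone
  inv := hinv
  mul_assoc a b c := by
    show hmul (hmul a b) c = hmul a (hmul b c)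
    ext <;> (dsimp [hmul]; ring)
  one_mul a := by
    show hmul hone a = a
    ext <;> (dsimp [hmul, hone]; ring)
  mul_one a := by
    show hmul a hone = a
    ext <;> (dsimp [hmul, hone]; ring)
  inv_mul_cancel a := by
    show hmul (hinv a) a = hone
    ext <;> (dsimp [hmul, hinv, hone]; ring)

@[simp] theorem mul_x (a b : Heis r) : (a * b).x = a.x + b.x := rfl
@[simp] theorem mul_y (a b : Heis r) : (a * b).y = a.y + b.y + a.x * b.z := rfl
@[simp] theorem mul_z (a b : Heis r) : (a * b).z = a.z + b.z := rfl
@[simp] theorem one_x : (1 : Heis r).x = 0 := rfl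
@[simp] theorem one_y : (1 : Heis r).y = 0 := rfl
@[simp] theorem one_z : (1 : Heis r).z = 0 := rfl
@[simp] theorem inv_x (a : Heis r) : (a⁻¹).x = -a.x := rfl
@[simp] theorem inv_y (a : Heis r) : (a⁻¹).y = a.x * a.z - a.y := rfl
@[simp] theorem inv_z (a : Heis r) : (a⁻¹).z = -a.z := rfl

/-- Componentwise reduction `Heis r → Heis s` when `s ∣ r`. -/
def heisMap {r s : ℕ} (h : s ∣ r) : Heis r →* Heis s where
  toFun a := ⟨ZMod.castHom h (ZMod s) a.x, ZMod.castHom h (ZMod s) a.y, ZMod.castHom h (ZMod s) a.z⟩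
  map_one' := by
    ext <;> simp only [one_x, one_y, one_z, map_zero]
  map_mul' a b := by
    ext <;> simp only [mul_x, mul_y, mul_z, map_add, map_mul]

end Heis

/-- Componentwise reduction modulo `p ^ (n - 1)` from `Heis (p ^ n)` to `Heis (p ^ (n - 1))`. -/
def heisQ (p n : ℕ) : Heis (p ^ n) →* Heis (p ^ (n - 1)) :=
  Heis.heisMap (pow_dvd_pow p (Nat.sub_le n 1))

/-!
Two elements `a`, `b` of `Heis r` commute iff `a.x * b.z = b.x * a.z`, so a centralizer consists
of all lifts of a set of pairs `(x, z)`, with `y` free. For the reduction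
`q : Heis (s * k) → Heis s`, the preimage `q⁻¹(H)` contains `(s, 0, 0)` and `(0, 0, s)`, which
forces `x` and `z` to be multiples of `k` for every element centralizing it; after division by `k`
the remaining equations are those of `C(H)`. Hence the two sets of pairs are equinumerous, and
the measure grows by `k ^ 3` from `|q⁻¹(H)|` and by `k` from the free coordinate `y`.
-/

theorem card_comap_mul_card_of_surjective {G K : Type*} [Group G] [Group K] {f : G →* K}
    (hf : Function.Surjective f) (H : Subgroup K) :
    Nat.card (H.comap f) * Nat.card K = Nat.card H * Nat.card G := by
  rw [← H.card_mul_index, ← (H.comap f).card_mul_index, H.index_comap_of_surjective hf]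
  ring

/-- Multiplication by `k` as an additive map from `ZMod s` to `ZMod (s * k)`. For `k ≠ 0` it
identifies `ZMod s` with the multiples of `k`, and so gives meaning to division by `k`. -/
def zmodScale (s k : ℕ) : ZMod s →+ ZMod (s * k) :=
  ZMod.lift s ⟨zmultiplesHom (ZMod (s * k)) k, by
    simpa only [zmultiplesHom_apply, natCast_zsmul, nsmul_eq_mul, Nat.cast_mul] using
      ZMod.natCast_self (s * k)⟩

section zmodScale

variable {s k : ℕ}

theorem zmodScale_intCast (m : ℤ) : zmodScale s k m = k * m := by
  simp only [zmodScale, ZMod.lift_coe, zmultiplesHom_apply, zsmul_eq_mul, mul_comm]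

theorem zmodScale_castHom_mul (u : ZMod (s * k)) (v : ZMod s) :
    zmodScale s k (ZMod.castHom (dvd_mul_right s k) (ZMod s) u * v) = u * zmodScale s k v := by
  obtain ⟨m, rfl⟩ := ZMod.intCast_surjective u
  obtain ⟨n, rfl⟩ := ZMod.intCast_surjective v
  rw [map_intCast, ← Int.cast_mul, zmodScale_intCast, zmodScale_intCast, Int.cast_mul,
    mul_left_comm]

theorem zmodScale_injective (hk : k ≠ 0) : Function.Injective (zmodScale s k) := by
  refine (ZMod.lift_injective s).2 fun m hm => ?_
  have hdvd : (s * k : ℤ) ∣ m * k := by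
    rw [← Nat.cast_mul, ← ZMod.intCast_zmod_eq_zero_iff_dvd]
    simpa only [zmultiplesHom_apply, zsmul_eq_mul, Int.cast_mul, Int.cast_natCast] using hm
  rw [ZMod.intCast_zmod_eq_zero_iff_dvd]
  exact Int.dvd_of_mul_dvd_mul_right (Nat.cast_ne_zero.2 hk) hdvd

theorem exists_zmodScale_eq (hs : s ≠ 0) {v : ZMod (s * k)} (hv : (s : ZMod (s * k)) * v = 0) :
    ∃ u, zmodScale s k u = v := by
  obtain ⟨m, rfl⟩ := ZMod.intCast_surjective v
  have hdvd : (s * k : ℤ) ∣ s * m := by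
    rw [← Nat.cast_mul, ← ZMod.intCast_zmod_eq_zero_iff_dvd]
    exact_mod_cast hv
  obtain ⟨n, rfl⟩ := Int.dvd_of_mul_dvd_mul_left (Nat.cast_ne_zero.2 hs) hdvd
  exact ⟨n, by rw [zmodScale_intCast, Int.cast_mul, Int.cast_natCast]⟩

end zmodScale

namespace Heis

/-- An element of the Heisenberg group as the pair of its coordinates `x`, `z`, which decide
commutation, together with its coordinate `y` along the subgroup `(0, *, 0)`. -/
def equivProd (r : ℕ) : Heis r ≃ (ZMod r × ZMod r) × ZMod r where
  toFun a := ((a.x, a.z), a.y)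
  invFun t := ⟨t.1.1, t.2, t.1.2⟩

theorem natCard (r : ℕ) : Nat.card (Heis r) = r ^ 3 := by
  rw [Nat.card_congr (equivProd r), Nat.card_prod, Nat.card_prod, Nat.card_zmod]
  ring

theorem mul_comm_iff {r : ℕ} (a b : Heis r) : a * b = b * a ↔ a.x * b.z = b.x * a.z := by
  simp only [Heis.ext_iff, mul_x, mul_y, mul_z, add_comm b.x, add_comm b.y, add_comm b.z,
    add_right_inj, true_and, and_true]

/-- The pairs of coordinates `(x, z)` of the elements of `Heis r` commuting with all of `S`. -/
def commutingPairs {r : ℕ} (S : Set (Heis r)) : Set (ZMod r × ZMod r) :=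
  {t | ∀ a ∈ S, a.x * t.2 = t.1 * a.z}

theorem mem_centralizer_iff {r : ℕ} {S : Set (Heis r)} {g : Heis r} :
    g ∈ Subgroup.centralizer S ↔ (equivProd r g).1 ∈ commutingPairs S :=
  forall₂_congr fun a _ => mul_comm_iff a g

theorem natCard_centralizer {r : ℕ} (S : Set (Heis r)) :
    Nat.card (Subgroup.centralizer S) = Nat.card (commutingPairs S) * r := by
  have e : Subgroup.centralizer S ≃ commutingPairs S × ZMod r :=
    ((equivProd r).subtypeEquiv fun _ => mem_centralizer_iff).trans
      (Equiv.prodSubtypeFstEquivSubtypeProd (p := (· ∈ commutingPairs S)))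
  rw [Nat.card_congr e, Nat.card_prod, Nat.card_zmod]

theorem heisMap_surjective {r s : ℕ} (h : s ∣ r) : Function.Surjective (heisMap h) := by
  intro b
  obtain ⟨x, hx⟩ := ZMod.castHom_surjective h b.x
  obtain ⟨y, hy⟩ := ZMod.castHom_surjective h b.y
  obtain ⟨z, hz⟩ := ZMod.castHom_surjective h b.z
  exact ⟨⟨x, y, z⟩, Heis.ext hx hy hz⟩

variable {s k : ℕ}

theorem natCard_comap_heisMap (hs : s ≠ 0) (H : Subgroup (Heis s)) :
    Nat.card (H.comap (heisMap (dvd_mul_right s k))) = k ^ 3 * Nat.card H := by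
  have hcard := card_comap_mul_card_of_surjective (heisMap_surjective (dvd_mul_right s k)) H
  rw [natCard, natCard] at hcard
  refine Nat.eq_of_mul_eq_mul_right (pow_pos (Nat.pos_of_ne_zero hs) 3) (hcard.trans ?_)
  ring

theorem zmodScale_mem_commutingPairs_comap_iff (hk : k ≠ 0) (H : Subgroup (Heis s))
    (u v : ZMod s) :
    (zmodScale s k u, zmodScale s k v) ∈
        commutingPairs (H.comap (heisMap (dvd_mul_right s k)) : Set (Heis (s * k))) ↔
      (u, v) ∈ commutingPairs (H : Set (Heis s)) := by
  have hcomm (a : Heis (s * k)) : a.x * zmodScale s k v = zmodScale s k u * a.z ↔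
      (heisMap (dvd_mul_right s k) a).x * v = u * (heisMap (dvd_mul_right s k) a).z := by
    rw [mul_comm _ a.z, ← zmodScale_castHom_mul, ← zmodScale_castHom_mul,
      (zmodScale_injective hk).eq_iff, mul_comm _ u]
    rfl
  refine ⟨fun ht b hb => ?_, fun ht a ha => (hcomm a).2 (ht _ ha)⟩
  obtain ⟨a, rfl⟩ := heisMap_surjective (dvd_mul_right s k) b
  exact (hcomm a).1 (ht a hb)

theorem natCast_mul_eq_zero_of_mem_commutingPairs_comap {r s : ℕ} (h : s ∣ r)
    (H : Subgroup (Heis s)) {t : ZMod r × ZMod r}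
    (ht : t ∈ commutingPairs (H.comap (heisMap h) : Set (Heis r))) :
    s * t.1 = 0 ∧ s * t.2 = 0 := by
  have hs : ZMod.castHom h (ZMod s) s = 0 := by rw [map_natCast, ZMod.natCast_self]
  have hx : (⟨s, 0, 0⟩ : Heis r) ∈ H.comap (heisMap h) :=
    (heisMap h).ker_le_comap H (Heis.ext hs (map_zero _) (map_zero _))
  have hz : (⟨0, 0, s⟩ : Heis r) ∈ H.comap (heisMap h) :=
    (heisMap h).ker_le_comap H (Heis.ext (map_zero _) (map_zero _) hs)
  constructor
  · simpa only [zero_mul, mul_comm t.1, eq_comm] using ht _ hz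
  · simpa only [mul_zero] using ht _ hx

theorem commutingPairs_comap_heisMap (hs : s ≠ 0) (hk : k ≠ 0) (H : Subgroup (Heis s)) :
    commutingPairs (H.comap (heisMap (dvd_mul_right s k)) : Set (Heis (s * k))) =
      Prod.map (zmodScale s k) (zmodScale s k) '' commutingPairs (H : Set (Heis s)) := by
  refine Set.Subset.antisymm (fun t ht => ?_) (Set.image_subset_iff.2 fun t ht =>
    (zmodScale_mem_commutingPairs_comap_iff hk H t.1 t.2).2 ht)
  obtain ⟨hx, hz⟩ := natCast_mul_eq_zero_of_mem_commutingPairs_comap (dvd_mul_right s k) H ht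
  obtain ⟨u, hu⟩ := exists_zmodScale_eq hs hx
  obtain ⟨v, hv⟩ := exists_zmodScale_eq hs hz
  obtain rfl : (zmodScale s k u, zmodScale s k v) = t := Prod.ext hu hv
  exact ⟨(u, v), (zmodScale_mem_commutingPairs_comap_iff hk H u v).1 ht, rfl⟩

theorem natCard_centralizer_comap_heisMap (hs : s ≠ 0) (hk : k ≠ 0) (H : Subgroup (Heis s)) :
    Nat.card (Subgroup.centralizer
        (H.comap (heisMap (dvd_mul_right s k)) : Set (Heis (s * k)))) =
      k * Nat.card (Subgroup.centralizer (H : Set (Heis s))) := by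
  have hinj := zmodScale_injective (s := s) hk
  rw [natCard_centralizer, natCard_centralizer, commutingPairs_comap_heisMap hs hk,
    Nat.card_image_of_injective (hinj.prodMap hinj)]
  ring

end Heis

theorem statement14_general {r s : ℕ} (hr : r ≠ 0) (h : s ∣ r) (H : Subgroup (Heis s)) :
    Nat.card (H.comap (Heis.heisMap h)) *
        Nat.card (Subgroup.centralizer (H.comap (Heis.heisMap h) : Set (Heis r))) =
      (r / s) ^ 4 * (Nat.card H * Nat.card (Subgroup.centralizer (H : Set (Heis s)))) := by
  obtain ⟨k, rfl⟩ := h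
  obtain ⟨hs, hk⟩ := mul_ne_zero_iff.1 hr
  rw [Heis.natCard_comap_heisMap hs, Heis.natCard_centralizer_comap_heisMap hs hk,
    Nat.mul_div_cancel_left k (Nat.pos_of_ne_zero hs)]
  ring

/-- for every subgroup `H ≤ 𝓗(pⁿ⁻¹)`, `m(q⁻¹(H)) = p⁴ * m(H)`, i.e.
`|q⁻¹(H)| * |C(q⁻¹(H))| = p⁴ * |H| * |C(H)|`. -/
theorem statement14 (p n : ℕ) (hp : p.Prime) (hn : 2 ≤ n)
    (H : Subgroup (Heis (p ^ (n - 1)))) :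
    Nat.card (H.comap (heisQ p n)) *
        Nat.card (Subgroup.centralizer
          ((H.comap (heisQ p n) : Subgroup (Heis (p ^ n))) : Set (Heis (p ^ n)))) =
      p ^ 4 * (Nat.card H *
        Nat.card (Subgroup.centralizer (H : Set (Heis (p ^ (n - 1)))))) := by
  have hdiv : p ^ n / p ^ (n - 1) = p := by
    rw [Nat.pow_div (n.sub_le 1) hp.pos, Nat.sub_sub_self (by omega), pow_one]
  simpa only [heisQ, hdiv] using
    statement14_general (pow_ne_zero n hp.ne_zero) (pow_dvd_pow p (n.sub_le 1)) H
end

section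
/- Let 1 → G₁ →f G →q G₂ → 1 be a short exact sequence of finite groups. Then 𝒫𝒞𝒟(G) = q⁻¹(𝒞𝒟(G₂)); that is, a subgroup K of G satisfies m_s(K) = m_s*(G) if and only if K = q⁻¹(H) for some subgroup H of G₂ with m(H) = m*(G₂). -/
/-!
The condition `[k, g] ∈ ker q` says that `q k` and `q g` commute, so `P(K; q) = q⁻¹(C(q(K)))`.
Hence enlarging `K` to `q⁻¹(q(K)) = K · ker q` leaves `P(K; q)` unchanged, and a maximizer `K` of
`m_s` is a full preimage. On full preimages, `m_s(q⁻¹(H)) = |ker q|² · m(H)`.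
-/

/-- The Chermak-Delgado measure `m(H) = |H| · |C_G(H)|`, with the junk value `0` if one of the two
subgroups is infinite. -/
noncomputable def chermakDelgadoMeasure {G : Type*} [Group G] (H : Subgroup G) : ℕ :=
  Nat.card H * Nat.card (Subgroup.centralizer (H : Set G))

section

variable {G N : Type*} [Group G] [Group N]

/-- The pseudo Chermak-Delgado measure `m_s(K) = |K| · |P(K; q)|`, with the junk value `0` if one
of the two subgroups is infinite. -/
noncomputable def pseudoChermakDelgadoMeasure (q : G →* N) (K : Subgroup G) : ℕ :=
  Nat.card K * Nat.card (pseudocentralizer q (K : Set G))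

theorem card_subgroup_comap (q : G →* N) (H : Subgroup N) :
    Nat.card (H.comap q) = Nat.card q.ker * Nat.card (q.range ⊓ H : Subgroup N) := by
  have card_eq := Subgroup.relIndex_mul_relIndex ⊥ q.ker (H.comap q) bot_le (q.ker_le_comap H)
  rw [Subgroup.relIndex_bot_left, Subgroup.relIndex_bot_left, Subgroup.relIndex_ker,
    Subgroup.map_comap_eq] at card_eq
  exact card_eq.symm

theorem card_subgroup_comap_of_surjective {q : G →* N} (hq : Function.Surjective q)
    (H : Subgroup N) : Nat.card (H.comap q) = Nat.card q.ker * Nat.card H := by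
  rw [card_subgroup_comap, MonoidHom.range_eq_top.mpr hq, top_inf_eq]

theorem pseudocentralizer_eq_comap_centralizer_image (q : G →* N) (S : Set G) :
    pseudocentralizer q S = (Subgroup.centralizer (q '' S)).comap q := by
  ext g
  simp only [mem_pseudocentralizer_iff, pc_mem_ker_iff, Subgroup.mem_comap,
    Subgroup.mem_centralizer_iff, Set.forall_mem_image, commute_iff_eq]

theorem pseudocentralizer_comap_map (q : G →* N) (K : Subgroup G) :
    pseudocentralizer q ((K.map q).comap q : Set G) = pseudocentralizer q (K : Set G) := by
  simp only [pseudocentralizer_eq_comap_centralizer_image, ← Subgroup.coe_map,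
    (Subgroup.gc_map_comap q).l_u_l_eq_l]

theorem pseudocentralizer_comap_of_surjective {q : G →* N} (hq : Function.Surjective q)
    (H : Subgroup N) :
    pseudocentralizer q (H.comap q : Set G) = (Subgroup.centralizer (H : Set N)).comap q := by
  rw [pseudocentralizer_eq_comap_centralizer_image, Subgroup.coe_comap,
    Set.image_preimage_eq _ hq]

theorem pseudoChermakDelgadoMeasure_comap {q : G →* N} (hq : Function.Surjective q)
    (H : Subgroup N) :
    pseudoChermakDelgadoMeasure q (H.comap q) =
      Nat.card q.ker ^ 2 * chermakDelgadoMeasure H := by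
  rw [pseudoChermakDelgadoMeasure, chermakDelgadoMeasure,
    pseudocentralizer_comap_of_surjective hq, card_subgroup_comap_of_surjective hq,
    card_subgroup_comap_of_surjective hq]
  ring

theorem pseudoChermakDelgadoMeasure_comap_le_comap_iff {q : G →* N} [Finite q.ker]
    (hq : Function.Surjective q) {H L : Subgroup N} :
    pseudoChermakDelgadoMeasure q (L.comap q) ≤ pseudoChermakDelgadoMeasure q (H.comap q) ↔
      chermakDelgadoMeasure L ≤ chermakDelgadoMeasure H := by
  rw [pseudoChermakDelgadoMeasure_comap hq, pseudoChermakDelgadoMeasure_comap hq,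
    Nat.mul_le_mul_left_iff (pow_pos Nat.card_pos 2)]

theorem pseudoChermakDelgadoMeasure_le_comap_map [Finite G] (q : G →* N) (K : Subgroup G) :
    pseudoChermakDelgadoMeasure q K ≤ pseudoChermakDelgadoMeasure q ((K.map q).comap q) := by
  rw [pseudoChermakDelgadoMeasure, pseudoChermakDelgadoMeasure, pseudocentralizer_comap_map]
  exact Nat.mul_le_mul_right _ (Subgroup.card_le_of_le (K.le_comap_map q))

theorem comap_map_eq_self_of_pseudoChermakDelgadoMeasure_le [Finite G] {q : G →* N}
    {K : Subgroup G}
    (hK : pseudoChermakDelgadoMeasure q ((K.map q).comap q) ≤ pseudoChermakDelgadoMeasure q K) :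
    (K.map q).comap q = K := by
  rw [pseudoChermakDelgadoMeasure, pseudoChermakDelgadoMeasure, pseudocentralizer_comap_map] at hK
  have card_le : Nat.card ((K.map q).comap q) ≤ Nat.card K :=
    Nat.le_of_mul_le_mul_right hK Nat.card_pos
  exact (Subgroup.eq_of_le_of_card_ge (K.le_comap_map q) card_le).symm

end

/-- for a short exact sequence `1 → G₁ → G → G₂ → 1` of finite groups,
`𝒫𝒞𝒟(G) = q⁻¹(𝒞𝒟(G₂))`: a subgroup `K ≤ G` attains the maximal pseudo Chermak-Delgado measure
iff `K = q⁻¹(H)` for some subgroup `H ≤ G₂` attaining the maximal Chermak-Delgado measure. -/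
theorem statement18 {G₁ G G₂ : Type*} [Group G₁] [Group G] [Group G₂]
    [Finite G₁] [Finite G] [Finite G₂]
    (f : G₁ →* G) (q : G →* G₂) (hf : Function.Injective f) (hq : Function.Surjective q)
    (hfq : f.range = q.ker) (K : Subgroup G) :
    (∀ L : Subgroup G,
        Nat.card L * Nat.card (pseudocentralizer q (L : Set G)) ≤
          Nat.card K * Nat.card (pseudocentralizer q (K : Set G))) ↔
      ∃ H : Subgroup G₂,
        (∀ L : Subgroup G₂,
          Nat.card L * Nat.card (Subgroup.centralizer (L : Set G₂)) ≤
            Nat.card H * Nat.card (Subgroup.centralizer (H : Set G₂))) ∧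
        K = H.comap q := by
  change (∀ L, pseudoChermakDelgadoMeasure q L ≤ pseudoChermakDelgadoMeasure q K) ↔
    ∃ H : Subgroup G₂, (∀ L, chermakDelgadoMeasure L ≤ chermakDelgadoMeasure H) ∧ K = H.comap q
  constructor
  · intro hK
    have hcomap : (K.map q).comap q = K :=
      comap_map_eq_self_of_pseudoChermakDelgadoMeasure_le (hK _)
    refine ⟨K.map q, fun L => ?_, hcomap.symm⟩
    rw [← pseudoChermakDelgadoMeasure_comap_le_comap_iff hq, hcomap]
    exact hK (L.comap q)
  · rintro ⟨H, hH, rfl⟩ L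
    calc pseudoChermakDelgadoMeasure q L
        ≤ pseudoChermakDelgadoMeasure q ((L.map q).comap q) :=
          pseudoChermakDelgadoMeasure_le_comap_map q L
      _ ≤ pseudoChermakDelgadoMeasure q (H.comap q) :=
          (pseudoChermakDelgadoMeasure_comap_le_comap_iff hq).mpr (hH (L.map q))
end
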